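/- Let H : ℝ^n × ℝ^n → ℝ be continuously differentiable, and let φ : ℝ^n → ℝ^n be a twice continuously differentiable diffeomorphism with Dφ(q) invertible for all q. Define K : ℝ^n × ℝ^n → ℝ by K(q,p) := H(φ(q), (Dφ(q)ᵀ)⁻¹ p). If (Q, P) : ℝ → ℝ^n × ℝ^n solves Hamilton's equations for K, then the curve t ↦ (φ(Q(t)), (Dφ(Q(t))ᵀ)⁻¹ P(t)) solves Hamilton's equations for H. -/

import Mathlib

/-!
With the symplectic form `ω((a, b), (c, d)) = ⟪a, d⟫ - ⟪b, c⟫`, the Hamiltonian vector field of `K`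
is characterised by `ω(X_K, ·) = DK`. A map `Ψ` whose derivative is surjective and preserves `ω`
therefore sends `X_{H ∘ Ψ}` to `X_H`, hence orbits of `H ∘ Ψ` to orbits of `H`.

For the cotangent lift, write `Ψ(q, p) = (φ(q), r(q, p))`. Differentiating the identity
`⟪r(q, p), Dφ(q) u⟫ = ⟪p, u⟫` gives `⟪Dr(v, w), Dφ(q) u⟫ = ⟪w, u⟫ - ⟪r, D²φ(q)(v, u)⟫`.
As `w` is arbitrary, `DΨ` is surjective; and in `ω(DΨ(v, w), DΨ(v', w'))` the second-order terms
cancel by symmetry of `D²φ(q)`.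
-/

noncomputable section

/-- A differentiable curve `(Q, P)` solves Hamilton's equations for `K` if
`Q' = ∇ₚ K(Q,P)` and `P' = -∇_q K(Q,P)`. -/
def SolvesHamilton {n : ℕ} (K : EuclideanSpace ℝ (Fin n) × EuclideanSpace ℝ (Fin n) → ℝ)
    (Q P : ℝ → EuclideanSpace ℝ (Fin n)) : Prop :=
  ∀ t : ℝ,
    HasDerivAt Q (gradient (fun p => K (Q t, p)) (P t)) t ∧
    HasDerivAt P (-gradient (fun q => K (q, P t)) (Q t)) t

open Filter Function Topology
open scoped InnerProductSpace

section NormedSpace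

variable {𝕜 E F : Type*} [NontriviallyNormedField 𝕜] [NormedAddCommGroup E] [NormedSpace 𝕜 E]
  [NormedAddCommGroup F] [NormedSpace 𝕜 F]

theorem isInvertible_of_bijective [CompleteSpace E] [CompleteSpace F] {T : E →L[𝕜] F}
    (hT : Bijective T) : T.IsInvertible :=
  ⟨.ofBijective T (LinearMap.ker_eq_bot.2 hT.1) (LinearMap.range_eq_top.2 hT.2),
    ContinuousLinearEquiv.coe_ofBijective T _ _⟩

theorem eventually_isInvertible [CompleteSpace E] {T : E →L[𝕜] F} (hT : T.IsInvertible) :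
    ∀ᶠ S in 𝓝 T, S.IsInvertible := by
  obtain ⟨e, rfl⟩ := hT
  exact e.nhds

theorem differentiableAt_fderiv_of_contDiffAt_two {f : E → F} {x : E}
    (hf : ContDiffAt 𝕜 2 f x) : DifferentiableAt 𝕜 (fderiv 𝕜 f) x :=
  (hf.fderiv_right (m := 1) one_add_one_eq_two.le).differentiableAt one_ne_zero

end NormedSpace

theorem isInvertible_adjoint {𝕜 E F : Type*} [RCLike 𝕜]
    [NormedAddCommGroup E] [InnerProductSpace 𝕜 E] [CompleteSpace E]
    [NormedAddCommGroup F] [InnerProductSpace 𝕜 F] [CompleteSpace F]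
    {T : E →L[𝕜] F} (hT : T.IsInvertible) : (ContinuousLinearMap.adjoint T).IsInvertible := by
  refine .of_inverse (g := ContinuousLinearMap.adjoint T.inverse) ?_ ?_
  · rw [← ContinuousLinearMap.adjoint_comp, hT.inverse_comp_self, ContinuousLinearMap.adjoint_id]
  · rw [← ContinuousLinearMap.adjoint_comp, hT.self_comp_inverse, ContinuousLinearMap.adjoint_id]

section PhaseSpace

variable {E F : Type*} [NormedAddCommGroup E] [InnerProductSpace ℝ E]
  [NormedAddCommGroup F] [InnerProductSpace ℝ F]

/-- The canonical symplectic form on the phase space `E × E`, whose second factor of momenta is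
identified with the dual of `E` through the inner product. -/
def symplecticForm (x y : E × E) : ℝ :=
  ⟪x.1, y.2⟫_ℝ - ⟪x.2, y.1⟫_ℝ

theorem eq_of_symplecticForm_eq {x y : E × E}
    (h : ∀ w, symplecticForm x w = symplecticForm y w) : x = y := by
  refine Prod.ext (ext_inner_right ℝ fun w => ?_) (ext_inner_right ℝ fun w => ?_)
  · simpa [symplecticForm] using h (0, w)
  · simpa [symplecticForm] using h (w, 0)

variable [CompleteSpace E] [CompleteSpace F]

/-- The Hamiltonian vector field `(∇ₚ K, -∇_q K)` of `K`, whose integral curves are the solutions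
of Hamilton's equations. Partial gradients are `0` where they do not exist. -/
def hamiltonianVectorField (K : E × E → ℝ) (z : E × E) : E × E :=
  (gradient (fun p => K (z.1, p)) z.2, -gradient (fun q => K (q, z.2)) z.1)

theorem solvesHamilton_iff {n : ℕ}
    {K : EuclideanSpace ℝ (Fin n) × EuclideanSpace ℝ (Fin n) → ℝ}
    {Q P : ℝ → EuclideanSpace ℝ (Fin n)} :
    SolvesHamilton K Q P ↔
      ∀ t, HasDerivAt (fun s => (Q s, P s)) (hamiltonianVectorField K (Q t, P t)) t :=
  forall_congr' fun _ => ⟨fun h => h.1.prodMk h.2, fun h => ⟨h.fst, h.snd⟩⟩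

theorem symplecticForm_hamiltonianVectorField {K : E × E → ℝ} {z : E × E}
    (hK : DifferentiableAt ℝ K z) (w : E × E) :
    symplecticForm (hamiltonianVectorField K z) w = fderiv ℝ K z w := by
  obtain ⟨q, p⟩ := z
  have hp : HasFDerivAt (fun y => K (q, y)) ((fderiv ℝ K (q, p)).comp (.inr ℝ E E)) p :=
    hK.hasFDerivAt.comp p (hasFDerivAt_prodMk_right q p)
  have hq : HasFDerivAt (fun x => K (x, p)) ((fderiv ℝ K (q, p)).comp (.inl ℝ E E)) q :=
    HasFDerivAt.comp (g := K) q hK.hasFDerivAt (hasFDerivAt_prodMk_left q p)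
  simp only [symplecticForm, hamiltonianVectorField, inner_neg_left, inner_gradient_left,
    hp.fderiv, hq.fderiv, ContinuousLinearMap.comp_apply, ContinuousLinearMap.inr_apply,
    ContinuousLinearMap.inl_apply, sub_neg_eq_add, ← map_add, Prod.mk_add_mk, zero_add, add_zero]

theorem fderiv_hamiltonianVectorField_comp {H : F × F → ℝ} {Ψ : E × E → F × F} {z : E × E}
    (hH : DifferentiableAt ℝ H (Ψ z)) (hΨ : DifferentiableAt ℝ Ψ z)
    (hsymp : ∀ v w, symplecticForm (fderiv ℝ Ψ z v) (fderiv ℝ Ψ z w) = symplecticForm v w)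
    (hsurj : Surjective (fderiv ℝ Ψ z)) :
    fderiv ℝ Ψ z (hamiltonianVectorField (H ∘ Ψ) z) = hamiltonianVectorField H (Ψ z) := by
  refine eq_of_symplecticForm_eq (hsurj.forall.2 fun w => ?_)
  calc symplecticForm (fderiv ℝ Ψ z (hamiltonianVectorField (H ∘ Ψ) z)) (fderiv ℝ Ψ z w)
      = symplecticForm (hamiltonianVectorField (H ∘ Ψ) z) w := hsymp _ _
    _ = fderiv ℝ (H ∘ Ψ) z w := symplecticForm_hamiltonianVectorField (hH.comp z hΨ) w
    _ = fderiv ℝ H (Ψ z) (fderiv ℝ Ψ z w) := by rw [fderiv_comp z hH hΨ]; rfl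
    _ = symplecticForm (hamiltonianVectorField H (Ψ z)) (fderiv ℝ Ψ z w) :=
      (symplecticForm_hamiltonianVectorField hH _).symm

theorem isBoundedLinearMap_adjoint :
    IsBoundedLinearMap ℝ (fun T : E →L[ℝ] F => ContinuousLinearMap.adjoint T) :=
  IsLinearMap.with_bound ⟨map_add _, fun c T => by simp⟩ 1 fun T => by simp

/-- The cotangent lift `Ψ(q, p) = (φ(q), (Dφ(q)ᵀ)⁻¹ p)` of `φ`; the inverse is `0` at points where
`Dφ(q)` is not invertible. -/
def cotangentLift (φ : E → F) (z : E × E) : F × F :=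
  (φ z.1, (ContinuousLinearMap.adjoint (fderiv ℝ φ z.1)).inverse z.2)

variable {φ : E → F} {z : E × E}

theorem inner_cotangentLift_snd (hinv : (fderiv ℝ φ z.1).IsInvertible) (u : E) :
    ⟪(cotangentLift φ z).2, fderiv ℝ φ z.1 u⟫_ℝ = ⟪z.2, u⟫_ℝ := by
  rw [← ContinuousLinearMap.adjoint_inner_left, cotangentLift,
    (isInvertible_adjoint hinv).self_apply_inverse]

theorem differentiableAt_cotangentLift (hφ : ContDiffAt ℝ 2 φ z.1)
    (hinv : (fderiv ℝ φ z.1).IsInvertible) : DifferentiableAt ℝ (cotangentLift φ) z := by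
  have hadj : DifferentiableAt ℝ (fun q => ContinuousLinearMap.adjoint (fderiv ℝ φ q)) z.1 :=
    isBoundedLinearMap_adjoint.differentiableAt.comp z.1
      (differentiableAt_fderiv_of_contDiffAt_two hφ)
  have hinverse : DifferentiableAt ℝ
      (fun q => (ContinuousLinearMap.adjoint (fderiv ℝ φ q)).inverse) z.1 :=
    DifferentiableAt.comp z.1 (g := ContinuousLinearMap.inverse)
      ((isInvertible_adjoint hinv).contDiffAt_map_inverse.differentiableAt one_ne_zero) hadj
  exact ((hφ.differentiableAt two_ne_zero).comp z differentiableAt_fst).prodMk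
    ((hinverse.comp z differentiableAt_fst).clm_apply differentiableAt_snd)

theorem fderiv_cotangentLift_apply_fst (hφ : ContDiffAt ℝ 2 φ z.1)
    (hinv : (fderiv ℝ φ z.1).IsInvertible) (v : E × E) :
    (fderiv ℝ (cotangentLift φ) z v).1 = fderiv ℝ φ z.1 v.1 := by
  have hfst := (differentiableAt_cotangentLift hφ hinv).hasFDerivAt.fst
  have hcomp := (hφ.differentiableAt two_ne_zero).hasFDerivAt.comp z hasFDerivAt_fst
  exact DFunLike.congr_fun (hfst.unique hcomp) v

theorem inner_fderiv_cotangentLift_apply_snd (hφ : ContDiffAt ℝ 2 φ z.1)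
    (hinv : (fderiv ℝ φ z.1).IsInvertible) (v : E × E) (u : E) :
    ⟪(fderiv ℝ (cotangentLift φ) z v).2, fderiv ℝ φ z.1 u⟫_ℝ =
      ⟪v.2, u⟫_ℝ - ⟪(cotangentLift φ z).2, fderiv ℝ (fderiv ℝ φ) z.1 v.1 u⟫_ℝ := by
  have hD2 := differentiableAt_fderiv_of_contDiffAt_two hφ
  have hinv' : ∀ᶠ y in 𝓝 z, (fderiv ℝ φ y.1).IsInvertible :=
    (hD2.continuousAt.comp continuousAt_fst).eventually (eventually_isInvertible hinv)
  have hDφu : HasFDerivAt (fun y : E × E => fderiv ℝ φ y.1 u)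
      (((fderiv ℝ (fderiv ℝ φ) z.1).flip u).comp (.fst ℝ E E)) z :=
    ((ContinuousLinearMap.apply ℝ F u).hasFDerivAt.comp z.1 hD2.hasFDerivAt).comp z
      hasFDerivAt_fst
  have hleft := (differentiableAt_cotangentLift hφ hinv).hasFDerivAt.snd.inner ℝ hDφu
  have hright := (hasFDerivAt_snd (𝕜 := ℝ) (p := z)).inner ℝ (hasFDerivAt_const u z)
  have heq := hleft.unique
    (hright.congr_of_eventuallyEq (hinv'.mono fun _ hy => inner_cotangentLift_snd hy u))
  have hv : ⟪(cotangentLift φ z).2, fderiv ℝ (fderiv ℝ φ) z.1 v.1 u⟫_ℝ +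
      ⟪(fderiv ℝ (cotangentLift φ) z v).2, fderiv ℝ φ z.1 u⟫_ℝ = ⟪v.2, u⟫_ℝ := by
    simpa using DFunLike.congr_fun heq v
  exact eq_sub_of_add_eq' hv

theorem symplecticForm_fderiv_cotangentLift (hφ : ContDiffAt ℝ 2 φ z.1)
    (hinv : (fderiv ℝ φ z.1).IsInvertible) (v w : E × E) :
    symplecticForm (fderiv ℝ (cotangentLift φ) z v) (fderiv ℝ (cotangentLift φ) z w) =
      symplecticForm v w := by
  have hsymm : fderiv ℝ (fderiv ℝ φ) z.1 v.1 w.1 = fderiv ℝ (fderiv ℝ φ) z.1 w.1 v.1 :=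
    hφ.isSymmSndFDerivAt (by simp) v.1 w.1
  simp only [symplecticForm, fderiv_cotangentLift_apply_fst hφ hinv,
    real_inner_comm _ (fderiv ℝ φ z.1 v.1), inner_fderiv_cotangentLift_apply_snd hφ hinv, hsymm,
    real_inner_comm _ v.1]
  ring

theorem surjective_fderiv_cotangentLift (hφ : ContDiffAt ℝ 2 φ z.1)
    (hinv : (fderiv ℝ φ z.1).IsInvertible) :
    Surjective (fderiv ℝ (cotangentLift φ) z) := by
  rintro ⟨a, b⟩
  obtain ⟨v, rfl⟩ := hinv.surjective a
  let w := ContinuousLinearMap.adjoint (fderiv ℝ φ z.1) b +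
    ContinuousLinearMap.adjoint (fderiv ℝ (fderiv ℝ φ) z.1 v) (cotangentLift φ z).2
  refine ⟨(v, w), Prod.ext (fderiv_cotangentLift_apply_fst hφ hinv _)
    (ext_inner_right ℝ (hinv.surjective.forall.2 fun u => ?_))⟩
  simp only [inner_fderiv_cotangentLift_apply_snd hφ hinv, w, inner_add_left,
    ContinuousLinearMap.adjoint_inner_left, add_sub_cancel_right]

theorem cotangent_lift_maps_orbits_general {H : F × F → ℝ} {θ : ℝ → E × E} {t : ℝ}
    (hH : DifferentiableAt ℝ H (cotangentLift φ (θ t))) (hφ : ContDiffAt ℝ 2 φ (θ t).1)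
    (hinv : (fderiv ℝ φ (θ t).1).IsInvertible)
    (hθ : HasDerivAt θ (hamiltonianVectorField (H ∘ cotangentLift φ) (θ t)) t) :
    HasDerivAt (cotangentLift φ ∘ θ) (hamiltonianVectorField H (cotangentLift φ (θ t))) t := by
  have hΨ := differentiableAt_cotangentLift hφ hinv
  rw [← fderiv_hamiltonianVectorField_comp hH hΨ (symplecticForm_fderiv_cotangentLift hφ hinv)
    (surjective_fderiv_cotangentLift hφ hinv)]
  exact hΨ.hasFDerivAt.comp_hasDerivAt t hθ

end PhaseSpace

/-- The cotangent lift `Ψ_φ(q,p) = (φ(q), (Dφ(q)ᵀ)⁻¹ p)` of a diffeomorphism `φ`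
maps orbits of `K = H ∘ Ψ_φ` to orbits of `H`. -/
theorem cotangent_lift_maps_orbits (n : ℕ)
    (H : EuclideanSpace ℝ (Fin n) × EuclideanSpace ℝ (Fin n) → ℝ)
    (hH : ContDiff ℝ 1 H)
    (φ : EuclideanSpace ℝ (Fin n) → EuclideanSpace ℝ (Fin n))
    (hφ : ContDiff ℝ 2 φ) (hbij : Function.Bijective φ)
    (hinv : ∀ q, Function.Bijective (fderiv ℝ φ q))
    (Q P : ℝ → EuclideanSpace ℝ (Fin n))
    (hQP : SolvesHamilton
      (fun z => H (φ z.1, (ContinuousLinearMap.adjoint (fderiv ℝ φ z.1)).inverse z.2)) Q P) :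
    SolvesHamilton H (fun t => φ (Q t))
      (fun t => (ContinuousLinearMap.adjoint (fderiv ℝ φ (Q t))).inverse (P t)) :=
  solvesHamilton_iff.2 fun t => cotangent_lift_maps_orbits_general
    (hH.differentiable one_ne_zero _) hφ.contDiffAt (isInvertible_of_bijective (hinv (Q t)))
    (solvesHamilton_iff.1 hQP t)
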